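/- Let d ≥ 1 and let f : ℝ^d → ℝ be continuously differentiable with L-Lipschitz gradient. Let x ∈ ℝ^d and let y₁, …, y_m ∈ ℝ^d be points, all distinct from x, such that the vectors y₁ − x, …, y_m − x span ℝ^d. For each j define the unit vector v_j = (y_j − x)/‖y_j − x‖, the slope s_j = (f(y_j) − f(x))/‖y_j − x‖, and a_j = (L/2)‖y_j − x‖. Then the polyhedron P = { z ∈ ℝ^d : |v_jᵀz − s_j| ≤ a_j for all j = 1, …, m } contains the gradient ∇f(x), and P is a bounded subset of ℝ^d. -/

import Mathlib

open scoped RealInnerProductSpace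

theorem descent_aux {d : ℕ} (f : EuclideanSpace ℝ (Fin d) → ℝ) (L : ℝ)
    (hf : ContDiff ℝ 1 f)
    (hLip : ∀ x y, ‖gradient f x - gradient f y‖ ≤ L * ‖x - y‖)
    (x h : EuclideanSpace ℝ (Fin d)) :
    |f (x + h) - f x - ⟪gradient f x, h⟫| ≤ (L / 2) * ‖h‖ ^ 2 := by
  have hg : ∀ t : ℝ, HasDerivAt (fun t : ℝ => f (x + t • h) - f x - t * ⟪gradient f x, h⟫)
      (⟪gradient f (x + t • h) - gradient f x, h⟫) t := by
    intro t
    have h1 : HasFDerivAt f _ (x + t • h) :=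
      ((hf.differentiable (by norm_num)) (x + t • h)).hasGradientAt.hasFDerivAt
    have h2 : HasDerivAt (fun t : ℝ => x + t • h) h t := by
      simpa using ((hasDerivAt_id t).smul_const h).const_add x
    have h3 := h1.comp_hasDerivAt t h2
    have h4 := (h3.sub_const (f x)).sub ((hasDerivAt_id t).mul_const ⟪gradient f x, h⟫)
    refine HasDerivAt.congr_deriv (f := fun t : ℝ => f (x + t • h) - f x - t * ⟪gradient f x, h⟫) h4 ?_
    simp [inner_sub_left]
  have hB : ∀ t : ℝ, HasDerivAt (fun t : ℝ => (L / 2) * ‖h‖ ^ 2 * t ^ 2)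
      (L * ‖h‖ ^ 2 * t) t := by
    intro t
    have := (hasDerivAt_pow 2 t).const_mul ((L / 2) * ‖h‖ ^ 2)
    refine this.congr_deriv ?_
    norm_num
    ring
  have key := image_norm_le_of_norm_deriv_right_le_deriv_boundary (a := 0) (b := 1)
    (fun t _ => (hg t).continuousAt.continuousWithinAt)
    (fun t _ => (hg t).hasDerivWithinAt) (by simp) hB (by
      intro t ht
      have h5 := hLip (x + t • h) x
      rw [add_sub_cancel_left, norm_smul, Real.norm_of_nonneg ht.1] at h5
      calc ‖⟪gradient f (x + t • h) - gradient f x, h⟫‖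
          ≤ ‖gradient f (x + t • h) - gradient f x‖ * ‖h‖ := norm_inner_le_norm _ _
        _ ≤ (L * (t * ‖h‖)) * ‖h‖ := by gcongr
        _ = L * ‖h‖ ^ 2 * t := by ring) (Set.right_mem_Icc.2 zero_le_one)
  simpa using key

/-- the gradient lies in the polyhedron determined by the
finite-difference slopes, and this polyhedron is bounded when the
displacement vectors span `ℝ^d` (Lemma 3 of the paper). -/
theorem stmt10 (d m : ℕ) (hd : 1 ≤ d)
    (f : EuclideanSpace ℝ (Fin d) → ℝ) (L : ℝ)
    (hf : ContDiff ℝ 1 f)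
    (hLip : ∀ x y, ‖gradient f x - gradient f y‖ ≤ L * ‖x - y‖)
    (x : EuclideanSpace ℝ (Fin d)) (y : Fin m → EuclideanSpace ℝ (Fin d))
    (hy : ∀ j, y j ≠ x)
    (hspan : Submodule.span ℝ (Set.range fun j => y j - x) = ⊤) :
    gradient f x ∈
      {z : EuclideanSpace ℝ (Fin d) | ∀ j,
        |⟪‖y j - x‖⁻¹ • (y j - x), z⟫ - (f (y j) - f x) / ‖y j - x‖| ≤
          (L/2) * ‖y j - x‖}
    ∧ Bornology.IsBounded
      {z : EuclideanSpace ℝ (Fin d) | ∀ j,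
        |⟪‖y j - x‖⁻¹ • (y j - x), z⟫ - (f (y j) - f x) / ‖y j - x‖| ≤
          (L/2) * ‖y j - x‖} := by
  constructor
  · intro j
    have hpos : 0 < ‖y j - x‖ := norm_pos_iff.2 (sub_ne_zero.2 (hy j))
    have h := descent_aux f L hf hLip x (y j - x)
    rw [add_sub_cancel, real_inner_comm] at h
    have e : ⟪‖y j - x‖⁻¹ • (y j - x), gradient f x⟫ - (f (y j) - f x) / ‖y j - x‖
        = -((f (y j) - f x - ⟪y j - x, gradient f x⟫) / ‖y j - x‖) := by
      rw [real_inner_smul_left]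
      field_simp
      ring
    rw [e, abs_neg, abs_div, abs_of_pos hpos, div_le_iff₀ hpos]
    linarith
  · set P := {z : EuclideanSpace ℝ (Fin d) | ∀ j,
        |⟪‖y j - x‖⁻¹ • (y j - x), z⟫ - (f (y j) - f x) / ‖y j - x‖| ≤
          (L/2) * ‖y j - x‖} with hP
    have hb : ∀ w : EuclideanSpace ℝ (Fin d), ∃ C : ℝ, ∀ z ∈ P, |⟪w, z⟫| ≤ C := by
      intro w
      have hw : w ∈ Submodule.span ℝ (Set.range fun j => y j - x) := by
        rw [hspan]; trivial
      induction hw using Submodule.span_induction with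
      | mem w hw =>
        obtain ⟨j, rfl⟩ := hw
        have hpos : 0 < ‖y j - x‖ := norm_pos_iff.2 (sub_ne_zero.2 (hy j))
        refine ⟨‖y j - x‖ * ((L/2) * ‖y j - x‖ + |(f (y j) - f x) / ‖y j - x‖|), ?_⟩
        intro z hz
        have h := hz j
        have h2 := abs_sub_abs_le_abs_sub ⟪‖y j - x‖⁻¹ • (y j - x), z⟫
          ((f (y j) - f x) / ‖y j - x‖)
        have e : ⟪y j - x, z⟫ = ‖y j - x‖ * ⟪‖y j - x‖⁻¹ • (y j - x), z⟫ := by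
          rw [real_inner_smul_left]
          field_simp
        simp only
        rw [e, abs_mul, abs_of_pos hpos]
        apply mul_le_mul_of_nonneg_left _ hpos.le
        linarith
      | zero => exact ⟨0, by simp⟩
      | add a b _ _ ha hb =>
        obtain ⟨A, hA⟩ := ha
        obtain ⟨B, hB⟩ := hb
        refine ⟨A + B, fun z hz => ?_⟩
        rw [inner_add_left]
        exact (abs_add_le _ _).trans (add_le_add (hA z hz) (hB z hz))
      | smul c a _ ha =>
        obtain ⟨A, hA⟩ := ha
        refine ⟨|c| * A, fun z hz => ?_⟩
        rw [real_inner_smul_left, abs_mul]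
        exact mul_le_mul_of_nonneg_left (hA z hz) (abs_nonneg c)
    choose C hC using hb
    let b := EuclideanSpace.basisFun (Fin d) ℝ
    refine isBounded_iff_forall_norm_le.2 ⟨∑ i, C (b i), fun z hz => ?_⟩
    calc ‖z‖ = ‖∑ i, ⟪b i, z⟫ • b i‖ := by rw [b.sum_repr' z]
      _ ≤ ∑ i, ‖⟪b i, z⟫ • b i‖ := norm_sum_le _ _
      _ ≤ ∑ i, C (b i) := by
        apply Finset.sum_le_sum
        intro i _
        rw [norm_smul, b.norm_eq_one, mul_one]
        exact hC _ z hz
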